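/- Let A ∈ ℝ^{n×n} be symmetric positive semidefinite and B, C ∈ ℝ^{n×n} symmetric positive definite. Then for every 1 ≤ k ≤ n: (1) λ_k(A,C)·λ_1(C,B) ≤ λ_k(A,B) ≤ λ_k(A,C)·λ_n(C,B), and (2) λ_1(A,C)·λ_k(C,B) ≤ λ_k(A,B) ≤ λ_n(A,C)·λ_k(C,B). -/

import Mathlib

open Matrix

/-- The eigenvalues of a symmetric real matrix listed in ascending order with multiplicity. -/
noncomputable def sortedEigs {n : ℕ} (M : Matrix (Fin n) (Fin n) ℝ) : Fin n → ℝ :=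
  if h : M.IsHermitian then h.eigenvalues ∘ Tuple.sort h.eigenvalues else 0

-- The generalized eigenvalues `λ_1(A,B) ≤ … ≤ λ_n(A,B)`: the eigenvalues of
-- `B^{-1/2} A B^{-1/2}` in ascending order with multiplicity (`B` positive definite).
open Classical MatrixOrder in
noncomputable def genEigs {n : ℕ} (A B : Matrix (Fin n) (Fin n) ℝ) : Fin n → ℝ :=
  if hB : B.PosDef then sortedEigs ((CFC.sqrt B)⁻¹ * A * (CFC.sqrt B)⁻¹) else 0

/-! Diagonalizing `B^{-1/2} A B^{-1/2}` gives `P` with `A = Pᵀ diag(λ(A,B)) P` and `B = Pᵀ P`. On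
the subspace where the first `k - 1` coordinates of `P x` vanish, the quotient `xᵀAx / xᵀBx` is at
least `λ_k(A,B)`, and on the one where the last `n - k` vanish it is at most `λ_k(A,B)`. Such
subspaces for the pairs `(A,C)`, `(C,B)` and `(A,B)` share a nonzero vector as soon as their
codimensions sum to less than `n`, and there `xᵀAx / xᵀBx = (xᵀAx / xᵀCx) (xᵀCx / xᵀBx)` compares
the eigenvalues. -/

theorem dotProduct_transpose_mul_diagonal_mul_mulVec {R m n : Type*} [CommSemiring R] [Fintype m]
    [DecidableEq m] [Fintype n] (P : Matrix m n R) (d : m → R) (x : n → R) :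
    x ⬝ᵥ (Pᵀ * diagonal d * P) *ᵥ x = ∑ i, d i * (P *ᵥ x) i ^ 2 := by
  rw [Matrix.mul_assoc, ← mulVec_mulVec, dotProduct_mulVec, vecMul_transpose, ← mulVec_mulVec]
  exact Finset.sum_congr rfl fun i _ => by rw [mulVec_diagonal]; ring

theorem dotProduct_transpose_mul_self_mulVec {R m n : Type*} [CommSemiring R] [Fintype m]
    [Fintype n] (P : Matrix m n R) (x : n → R) :
    x ⬝ᵥ (Pᵀ * P) *ᵥ x = ∑ i, (P *ᵥ x) i ^ 2 := by
  rw [← mulVec_mulVec, dotProduct_mulVec, vecMul_transpose]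
  simp only [dotProduct, sq]

theorem exists_submodule_mulVec_eq_zero {K m n : Type*} [Field K] [Fintype n]
    (P : Matrix m n K) (s : Finset m) :
    ∃ V : Submodule K (n → K),
      Fintype.card n ≤ Module.finrank K V + s.card ∧ ∀ x ∈ V, ∀ i ∈ s, (P *ᵥ x) i = 0 := by
  let f : (n → K) →ₗ[K] (s → K) := LinearMap.funLeft K K Subtype.val ∘ₗ P.mulVecLin
  refine ⟨LinearMap.ker f, ?_, fun x hx i hi => congrFun (LinearMap.mem_ker.mp hx) ⟨i, hi⟩⟩
  have h_range : Module.finrank K (LinearMap.range f) ≤ s.card := by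
    simpa using (LinearMap.range f).finrank_le
  have h_rank := f.finrank_range_add_finrank_ker
  rw [Module.finrank_fintype_fun_eq_card] at h_rank
  lia

theorem exists_ne_zero_mem_of_two_mul_finrank_lt {K E : Type*} [DivisionRing K] [AddCommGroup E]
    [Module K E] [FiniteDimensional K E] {U V W : Submodule K E}
    (h : 2 * Module.finrank K E <
      Module.finrank K U + Module.finrank K V + Module.finrank K W) :
    ∃ x ≠ 0, x ∈ U ∧ x ∈ V ∧ x ∈ W := by
  have hUV := Submodule.finrank_sup_add_finrank_inf_eq U V
  have hUVW := Submodule.finrank_sup_add_finrank_inf_eq (U ⊓ V) W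
  have h_pos : 0 < Module.finrank K ↥(U ⊓ V ⊓ W) := by
    linarith [(U ⊔ V).finrank_le, (U ⊓ V ⊔ W).finrank_le]
  obtain ⟨x, ⟨⟨hxU, hxV⟩, hxW⟩, hx⟩ :=
    Submodule.exists_mem_ne_zero_of_ne_bot (Submodule.one_le_finrank_iff.mp h_pos)
  exact ⟨x, hx, hxU, hxV, hxW⟩

section GeneralizedEigenvalues

variable {n : ℕ} {A B C : Matrix (Fin n) (Fin n) ℝ}

theorem sortedEigs_monotone (M : Matrix (Fin n) (Fin n) ℝ) : Monotone (sortedEigs M) := by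
  unfold sortedEigs
  split_ifs with hM
  · exact Tuple.monotone_sort hM.eigenvalues
  · exact monotone_const

theorem genEigs_monotone (A B : Matrix (Fin n) (Fin n) ℝ) : Monotone (genEigs A B) := by
  unfold genEigs
  split_ifs
  · exact sortedEigs_monotone _
  · exact monotone_const

theorem exists_eq_transpose_mul_diagonal_sortedEigs_mul {M : Matrix (Fin n) (Fin n) ℝ}
    (hM : M.IsHermitian) :
    ∃ Q : Matrix (Fin n) (Fin n) ℝ, M = Qᵀ * diagonal (sortedEigs M) * Q ∧ Qᵀ * Q = 1 := by
  let U : Matrix (Fin n) (Fin n) ℝ := hM.eigenvectorUnitary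
  let σ := Tuple.sort hM.eigenvalues
  have hU : U * Uᵀ = 1 := Unitary.coe_mul_star_self hM.eigenvectorUnitary
  have hMU : M = U * diagonal hM.eigenvalues * Uᵀ := hM.spectral_theorem
  have hσ : diagonal (sortedEigs M) = (diagonal hM.eigenvalues).submatrix σ σ := by
    rw [sortedEigs, dif_pos hM, submatrix_diagonal_equiv]
  refine ⟨Uᵀ.submatrix σ id, ?_, ?_⟩
  · rw [hσ, transpose_submatrix, transpose_transpose, submatrix_mul_equiv, submatrix_mul_equiv,
      submatrix_id_id, ← hMU]
  · rw [transpose_submatrix, transpose_transpose, submatrix_mul_equiv, hU, submatrix_id_id]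

open MatrixOrder in
theorem exists_eq_transpose_mul_diagonal_genEigs_mul (hA : A.IsHermitian) (hB : B.PosDef) :
    ∃ P : Matrix (Fin n) (Fin n) ℝ, A = Pᵀ * diagonal (genEigs A B) * P ∧ B = Pᵀ * P := by
  let S := CFC.sqrt B
  have hSS : S * S = B := CFC.sqrt_mul_sqrt_self B hB.posSemidef.nonneg
  have hS : S.IsHermitian := (nonneg_iff_posSemidef.mp (CFC.sqrt_nonneg B)).isHermitian
  have hS_unit : IsUnit S.det :=
    (isUnit_iff_isUnit_det S).mp ((CFC.isUnit_sqrt_iff B hB.posSemidef.nonneg).mpr hB.isUnit)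
  have hM : (S⁻¹ * A * S⁻¹).IsHermitian := by
    simpa only [hS.inv.eq] using isHermitian_conjTranspose_mul_mul S⁻¹ hA
  obtain ⟨Q, hQ, hQQ⟩ := exists_eq_transpose_mul_diagonal_sortedEigs_mul hM
  have hS_transpose : Sᵀ = S := hS
  have h_eigs : genEigs A B = sortedEigs (S⁻¹ * A * S⁻¹) := dif_pos hB
  refine ⟨Q * S, ?_, ?_⟩
  · calc A = S * (S⁻¹ * A * S⁻¹) * S := by
          rw [mul_assoc S⁻¹, mul_nonsing_inv_cancel_left _ _ hS_unit,
            nonsing_inv_mul_cancel_right _ _ hS_unit]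
      _ = S * (Qᵀ * diagonal (genEigs A B) * Q) * S := by rw [h_eigs, ← hQ]
      _ = (Q * S)ᵀ * diagonal (genEigs A B) * (Q * S) := by
          simp only [transpose_mul, hS_transpose, mul_assoc]
  · calc B = S * (Qᵀ * Q) * S := by rw [hQQ, mul_one, hSS]
      _ = (Q * S)ᵀ * (Q * S) := by simp only [transpose_mul, hS_transpose, mul_assoc]

theorem exists_submodule_genEigs_mul_le (hA : A.IsHermitian) (hB : B.PosDef) (k : Fin n) :
    ∃ V : Submodule ℝ (Fin n → ℝ), n ≤ Module.finrank ℝ V + k ∧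
      ∀ x ∈ V, genEigs A B k * (x ⬝ᵥ B *ᵥ x) ≤ x ⬝ᵥ A *ᵥ x := by
  obtain ⟨P, hAP, hBP⟩ := exists_eq_transpose_mul_diagonal_genEigs_mul hA hB
  obtain ⟨V, h_dim, hV⟩ := exists_submodule_mulVec_eq_zero P (Finset.Iio k)
  refine ⟨V, by simpa using h_dim, fun x hx => ?_⟩
  calc genEigs A B k * (x ⬝ᵥ B *ᵥ x)
      = ∑ i, genEigs A B k * (P *ᵥ x) i ^ 2 := by
        rw [hBP, dotProduct_transpose_mul_self_mulVec, ← hBP, Finset.mul_sum]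
    _ ≤ ∑ i, genEigs A B i * (P *ᵥ x) i ^ 2 := Finset.sum_le_sum fun i _ => by
        rcases lt_or_ge i k with hik | hki
        · simp [hV x hx i (Finset.mem_Iio.mpr hik)]
        · exact mul_le_mul_of_nonneg_right (genEigs_monotone A B hki) (sq_nonneg _)
    _ = x ⬝ᵥ A *ᵥ x := by
        rw [← dotProduct_transpose_mul_diagonal_mul_mulVec, ← hAP]

theorem exists_submodule_le_genEigs_mul (hA : A.IsHermitian) (hB : B.PosDef) (k : Fin n) :
    ∃ V : Submodule ℝ (Fin n → ℝ), k + 1 ≤ Module.finrank ℝ V ∧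
      ∀ x ∈ V, x ⬝ᵥ A *ᵥ x ≤ genEigs A B k * (x ⬝ᵥ B *ᵥ x) := by
  obtain ⟨P, hAP, hBP⟩ := exists_eq_transpose_mul_diagonal_genEigs_mul hA hB
  obtain ⟨V, h_dim, hV⟩ := exists_submodule_mulVec_eq_zero P (Finset.Ioi k)
  rw [Fintype.card_fin, Fin.card_Ioi] at h_dim
  refine ⟨V, by lia, fun x hx => ?_⟩
  calc x ⬝ᵥ A *ᵥ x
      = ∑ i, genEigs A B i * (P *ᵥ x) i ^ 2 := by
        rw [← dotProduct_transpose_mul_diagonal_mul_mulVec, ← hAP]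
    _ ≤ ∑ i, genEigs A B k * (P *ᵥ x) i ^ 2 := Finset.sum_le_sum fun i _ => by
        rcases lt_or_ge k i with hki | hik
        · simp [hV x hx i (Finset.mem_Ioi.mpr hki)]
        · exact mul_le_mul_of_nonneg_right (genEigs_monotone A B hik) (sq_nonneg _)
    _ = genEigs A B k * (x ⬝ᵥ B *ᵥ x) := by
        rw [← Finset.mul_sum, ← dotProduct_transpose_mul_self_mulVec, ← hBP]

theorem genEigs_mul_genEigs_le (hA : A.IsHermitian) (hB : B.PosDef) (hC : C.PosDef)
    {i j k : Fin n} (hi : 0 ≤ genEigs A C i) (h : (i + j : ℕ) ≤ k) :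
    genEigs A C i * genEigs C B j ≤ genEigs A B k := by
  obtain ⟨U, hU_dim, hU⟩ := exists_submodule_genEigs_mul_le hA hC i
  obtain ⟨V, hV_dim, hV⟩ := exists_submodule_genEigs_mul_le hC.isHermitian hB j
  obtain ⟨W, hW_dim, hW⟩ := exists_submodule_le_genEigs_mul hA hB k
  obtain ⟨x, hx, hxU, hxV, hxW⟩ :=
    exists_ne_zero_mem_of_two_mul_finrank_lt (U := U) (V := V) (W := W)
      (by rw [Module.finrank_fin_fun]; lia)
  refine le_of_mul_le_mul_right ?_ (hB.dotProduct_mulVec_pos hx)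
  calc genEigs A C i * genEigs C B j * (x ⬝ᵥ B *ᵥ x)
      = genEigs A C i * (genEigs C B j * (x ⬝ᵥ B *ᵥ x)) := mul_assoc _ _ _
    _ ≤ genEigs A C i * (x ⬝ᵥ C *ᵥ x) := mul_le_mul_of_nonneg_left (hV x hxV) hi
    _ ≤ x ⬝ᵥ A *ᵥ x := hU x hxU
    _ ≤ genEigs A B k * (x ⬝ᵥ B *ᵥ x) := hW x hxW

theorem genEigs_le_genEigs_mul_genEigs (hA : A.IsHermitian) (hB : B.PosDef) (hC : C.PosDef)
    {i j k : Fin n} (hi : 0 ≤ genEigs A C i) (h : (k + n : ℕ) ≤ i + j + 1) :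
    genEigs A B k ≤ genEigs A C i * genEigs C B j := by
  obtain ⟨U, hU_dim, hU⟩ := exists_submodule_le_genEigs_mul hA hC i
  obtain ⟨V, hV_dim, hV⟩ := exists_submodule_le_genEigs_mul hC.isHermitian hB j
  obtain ⟨W, hW_dim, hW⟩ := exists_submodule_genEigs_mul_le hA hB k
  obtain ⟨x, hx, hxU, hxV, hxW⟩ :=
    exists_ne_zero_mem_of_two_mul_finrank_lt (U := U) (V := V) (W := W)
      (by rw [Module.finrank_fin_fun]; lia)
  refine le_of_mul_le_mul_right ?_ (hB.dotProduct_mulVec_pos hx)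
  calc genEigs A B k * (x ⬝ᵥ B *ᵥ x)
      ≤ x ⬝ᵥ A *ᵥ x := hW x hxW
    _ ≤ genEigs A C i * (x ⬝ᵥ C *ᵥ x) := hU x hxU
    _ ≤ genEigs A C i * (genEigs C B j * (x ⬝ᵥ B *ᵥ x)) := mul_le_mul_of_nonneg_left (hV x hxV) hi
    _ = genEigs A C i * genEigs C B j * (x ⬝ᵥ B *ᵥ x) := (mul_assoc _ _ _).symm

theorem genEigs_nonneg (hA : A.PosSemidef) (hB : B.PosDef) (k : Fin n) :
    0 ≤ genEigs A B k := by
  obtain ⟨V, h_dim, hV⟩ := exists_submodule_le_genEigs_mul hA.isHermitian hB k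
  have hV_ne_bot : V ≠ ⊥ := Submodule.one_le_finrank_iff.mp (by lia)
  obtain ⟨x, hxV, hx⟩ := Submodule.exists_mem_ne_zero_of_ne_bot hV_ne_bot
  have h_num : 0 ≤ x ⬝ᵥ A *ᵥ x := hA.dotProduct_mulVec_nonneg x
  exact nonneg_of_mul_nonneg_left (h_num.trans (hV x hxV)) (hB.dotProduct_mulVec_pos hx)

/-- The Weyl-type form of the bounds; for indices counted from `1`, the two conditions on them read
`i + j ≤ k + 1` and `k + n ≤ i + j`. -/
theorem genEigs_multiplicative_bounds_general (hA : A.IsHermitian) (hB : B.PosDef) (hC : C.PosDef)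
    {i : Fin n} (hi : 0 ≤ genEigs A C i) (j k : Fin n) :
    ((i + j : ℕ) ≤ k → genEigs A C i * genEigs C B j ≤ genEigs A B k) ∧
      ((k + n : ℕ) ≤ i + j + 1 → genEigs A B k ≤ genEigs A C i * genEigs C B j) :=
  ⟨genEigs_mul_genEigs_le hA hB hC hi, genEigs_le_genEigs_mul_genEigs hA hB hC hi⟩

end GeneralizedEigenvalues

/-- **Multiplicative eigenvalue bounds for three matrices** (Theorem 3.4 of Voet et al.).
For `A` symmetric positive semidefinite and `B, C` symmetric positive definite, for every `k`:
`λ_k(A,C)·λ_1(C,B) ≤ λ_k(A,B) ≤ λ_k(A,C)·λ_n(C,B)` and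
`λ_1(A,C)·λ_k(C,B) ≤ λ_k(A,B) ≤ λ_n(A,C)·λ_k(C,B)`. -/
theorem genEigs_multiplicative_bounds {n : ℕ} (A B C : Matrix (Fin (n+1)) (Fin (n+1)) ℝ)
    (hA : A.PosSemidef) (hB : B.PosDef) (hC : C.PosDef) :
    ∀ k : Fin (n+1),
      (genEigs A C k * genEigs C B 0 ≤ genEigs A B k ∧
        genEigs A B k ≤ genEigs A C k * genEigs C B (Fin.last n)) ∧
      (genEigs A C 0 * genEigs C B k ≤ genEigs A B k ∧
        genEigs A B k ≤ genEigs A C (Fin.last n) * genEigs C B k) := by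
  intro k
  have bounds (i j : Fin (n + 1)) := genEigs_multiplicative_bounds_general hA.isHermitian hB hC
    (genEigs_nonneg hA hC i) j k
  exact ⟨⟨(bounds k 0).1 (by simp), (bounds k (Fin.last n)).2 (by simp [add_assoc])⟩,
    (bounds 0 k).1 (by simp), (bounds (Fin.last n) k).2 (by grind)⟩
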